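/- arXiv:1503.06651 — 5 statements merged into one kernel-verified Lean document; each statement's English description precedes it below -/
import Mathlib

section
/- Let P_5(X) = 15X⁴ − 0.02X⁵ − 4.6X⁶ − 0.1X⁷ − 2X + 4 and Q_5(X) = 15X³ − 0.02X⁴ − 4.6X⁵ − 0.1X⁶ − 2. Then P_5(X) > 0 for all X ∈ (0, 1], so every positive real root of P_5 is greater than 1, while Q_5 has a positive real root smaller than 0.53. Consequently the smallest positive root of Q_5 is strictly smaller than every positive real root of P_5. -/
/-- `P₅(X) = 15X⁴ − 0.02X⁵ − 4.6X⁶ − 0.1X⁷ − 2X + 4`. -/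
noncomputable def P5 : ℝ → ℝ :=
  fun X => 15 * X ^ 4 - 0.02 * X ^ 5 - 4.6 * X ^ 6 - 0.1 * X ^ 7 - 2 * X + 4

/-- `Q₅(X) = 15X³ − 0.02X⁴ − 4.6X⁵ − 0.1X⁶ − 2`. -/
noncomputable def Q5 : ℝ → ℝ :=
  fun X => 15 * X ^ 3 - 0.02 * X ^ 4 - 4.6 * X ^ 5 - 0.1 * X ^ 6 - 2

/-- `P₅ > 0` on `(0, 1]`, so every positive root of `P₅` exceeds `1`; `Q₅` has a
positive root smaller than `0.53`; consequently the smallest positive root of `Q₅`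
is strictly smaller than every positive real root of `P₅`. -/
theorem Q5_smallest_root_lt_P5_roots :
    (∀ X ∈ Set.Ioc (0 : ℝ) 1, 0 < P5 X) ∧
    (∀ X : ℝ, 0 < X → P5 X = 0 → 1 < X) ∧
    (∃ X : ℝ, 0 < X ∧ X < 0.53 ∧ Q5 X = 0) ∧
    (∃ m : ℝ, IsLeast {X : ℝ | 0 < X ∧ Q5 X = 0} m ∧
      ∀ Y : ℝ, 0 < Y → P5 Y = 0 → m < Y) := by
  have hP : ∀ X ∈ Set.Ioc (0 : ℝ) 1, 0 < P5 X := by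
    rintro X ⟨h0, h1⟩
    have h4 : 0 < X ^ 4 := by positivity
    have h5 : X ^ 5 ≤ X ^ 4 := pow_le_pow_of_le_one h0.le h1 (by norm_num)
    have h6 : X ^ 6 ≤ X ^ 4 := pow_le_pow_of_le_one h0.le h1 (by norm_num)
    have h7 : X ^ 7 ≤ X ^ 4 := pow_le_pow_of_le_one h0.le h1 (by norm_num)
    unfold P5
    norm_num
    linarith
  have hR : ∀ X : ℝ, 0 < X → P5 X = 0 → 1 < X := by
    intro X h0 hX
    by_contra h
    have := hP X ⟨h0, not_lt.mp h⟩
    linarith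
  have hc : Continuous Q5 := by
    unfold Q5
    fun_prop
  have hQ0 : Q5 0 < 0 := by
    unfold Q5
    norm_num
  have hQ1 : 0 < Q5 0.53 := by
    unfold Q5
    norm_num
  have hE : ∃ X : ℝ, 0 < X ∧ X < 0.53 ∧ Q5 X = 0 := by
    obtain ⟨x, hx, hx0⟩ := intermediate_value_Ioo (by norm_num : (0 : ℝ) ≤ 0.53)
      hc.continuousOn ⟨hQ0, hQ1⟩
    exact ⟨x, hx.1, hx.2, hx0⟩
  refine ⟨hP, hR, hE, ?_⟩
  obtain ⟨x, hx0, hx1, hx⟩ := hE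
  have hK : IsCompact (Set.Icc (0 : ℝ) 0.53 ∩ {X | Q5 X = 0}) :=
    isCompact_Icc.inter_right (isClosed_eq hc continuous_const)
  obtain ⟨m, ⟨⟨hm0, hm1⟩, hm⟩, hmin⟩ := hK.exists_isLeast ⟨x, ⟨hx0.le, hx1.le⟩, hx⟩
  have hm' : Q5 m = 0 := hm
  have hmpos : 0 < m := by
    rcases hm0.eq_or_lt with h | h
    · rw [← h] at hm'
      linarith
    · exact h
  refine ⟨m, ⟨⟨hmpos, hm'⟩, ?_⟩, ?_⟩
  · rintro y ⟨hy0, hy⟩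
    rcases le_total y 0.53 with h | h
    · exact hmin ⟨⟨hy0.le, h⟩, hy⟩
    · exact hm1.trans h
  · intro Y hY0 hY
    have := hR Y hY0 hY
    have h2 : (0.53 : ℝ) < 1 := by norm_num
    linarith
end

section
/- Let P_6(X) = 25X⁶ − 0.03X⁷ − 6.9X⁸ − 0.15X⁹ − 3X + 6 and Q_6(X) = 25X⁵ − 0.03X⁶ − 6.9X⁷ − 0.15X⁸ − 3. Then P_6(X) > 0 for all X ∈ (0, 1], so every positive real root of P_6 is greater than 1, while Q_6 has a positive real root smaller than 0.68. Consequently the smallest positive root of Q_6 is strictly smaller than every positive real root of P_6. -/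
/-- `P₆(X) = 25X⁶ − 0.03X⁷ − 6.9X⁸ − 0.15X⁹ − 3X + 6`. -/
noncomputable def P6 : ℝ → ℝ :=
  fun X => 25 * X ^ 6 - 0.03 * X ^ 7 - 6.9 * X ^ 8 - 0.15 * X ^ 9 - 3 * X + 6

/-- `Q₆(X) = 25X⁵ − 0.03X⁶ − 6.9X⁷ − 0.15X⁸ − 3`. -/
noncomputable def Q6 : ℝ → ℝ :=
  fun X => 25 * X ^ 5 - 0.03 * X ^ 6 - 6.9 * X ^ 7 - 0.15 * X ^ 8 - 3

/-- `P₆ > 0` on `(0, 1]`, so every positive root of `P₆` exceeds `1`; `Q₆` has a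
positive root smaller than `0.68`; consequently the smallest positive root of `Q₆`
is strictly smaller than every positive real root of `P₆`. -/
theorem Q6_smallest_root_lt_P6_roots :
    (∀ X ∈ Set.Ioc (0 : ℝ) 1, 0 < P6 X) ∧
    (∀ X : ℝ, 0 < X → P6 X = 0 → 1 < X) ∧
    (∃ X : ℝ, 0 < X ∧ X < 0.68 ∧ Q6 X = 0) ∧
    (∃ m : ℝ, IsLeast {X : ℝ | 0 < X ∧ Q6 X = 0} m ∧
      ∀ Y : ℝ, 0 < Y → P6 Y = 0 → m < Y) := by
  have hP : ∀ X ∈ Set.Ioc (0 : ℝ) 1, 0 < P6 X := by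
    rintro X ⟨h0, h1⟩
    have h6 : 0 < X ^ 6 := by positivity
    have h7 : X ^ 7 ≤ X ^ 6 := pow_le_pow_of_le_one h0.le h1 (by norm_num)
    have h8 : X ^ 8 ≤ X ^ 6 := pow_le_pow_of_le_one h0.le h1 (by norm_num)
    have h9 : X ^ 9 ≤ X ^ 6 := pow_le_pow_of_le_one h0.le h1 (by norm_num)
    unfold P6
    norm_num
    linarith
  have hP' : ∀ X : ℝ, 0 < X → P6 X = 0 → 1 < X := by
    intro X h0 hX
    by_contra h
    exact (hP X ⟨h0, not_lt.mp h⟩).ne' hX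
  have hc : Continuous Q6 := by
    unfold Q6
    fun_prop
  have hQ0 : Q6 0 < 0 := by
    unfold Q6
    norm_num
  have hQ1 : 0 < Q6 0.68 := by
    unfold Q6
    norm_num
  have hQ : ∃ X : ℝ, 0 < X ∧ X < 0.68 ∧ Q6 X = 0 := by
    obtain ⟨x, hx, hx0⟩ := intermediate_value_Ioo (by norm_num : (0 : ℝ) ≤ 0.68)
      hc.continuousOn (show (0 : ℝ) ∈ Set.Ioo (Q6 0) (Q6 0.68) from ⟨hQ0, hQ1⟩)
    exact ⟨x, hx.1, hx.2, hx0⟩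
  refine ⟨hP, hP', hQ, ?_⟩
  obtain ⟨x, hx0, hx1, hx⟩ := hQ
  have hcomp : IsCompact (Set.Icc (0 : ℝ) 0.68 ∩ Q6 ⁻¹' {0}) :=
    isCompact_Icc.inter_right (isClosed_singleton.preimage hc)
  obtain ⟨m, ⟨⟨hm0, hm1⟩, hm⟩, hmin⟩ :=
    hcomp.exists_isLeast ⟨x, ⟨hx0.le, hx1.le⟩, hx⟩
  have hm' : Q6 m = 0 := hm
  have hmpos : 0 < m := by
    rcases hm0.lt_or_eq with h | h
    · exact h
    · rw [← h] at hm'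
      exact absurd hm' hQ0.ne
  refine ⟨m, ⟨⟨hmpos, hm'⟩, ?_⟩, ?_⟩
  · rintro y ⟨hy0, hy⟩
    rcases le_total y 0.68 with h | h
    · exact hmin ⟨⟨hy0.le, h⟩, hy⟩
    · exact hm1.trans h
  · intro Y hY0 hY
    have := hP' Y hY0 hY
    norm_num at hm1
    linarith
end

section
/- Let P_7(X) = 35X⁸ − 0.04X⁹ − 9.2X^{10} − 0.2X^{11} − 4X + 8 and Q_7(X) = 35X⁷ − 0.04X⁸ − 9.2X⁹ − 0.2X^{10} − 4. Then P_7(X) > 0 for all X ∈ (0, 1], so every positive real root of P_7 is greater than 1, while Q_7 has a positive real root smaller than 0.76. Consequently the smallest positive root of Q_7 is strictly smaller than every positive real root of P_7. -/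
/-- `P₇(X) = 35X⁸ − 0.04X⁹ − 9.2X¹⁰ − 0.2X¹¹ − 4X + 8`. -/
noncomputable def P7 : ℝ → ℝ :=
  fun X => 35 * X ^ 8 - 0.04 * X ^ 9 - 9.2 * X ^ 10 - 0.2 * X ^ 11 - 4 * X + 8

/-- `Q₇(X) = 35X⁷ − 0.04X⁸ − 9.2X⁹ − 0.2X¹⁰ − 4`. -/
noncomputable def Q7 : ℝ → ℝ :=
  fun X => 35 * X ^ 7 - 0.04 * X ^ 8 - 9.2 * X ^ 9 - 0.2 * X ^ 10 - 4

/-- `P₇ > 0` on `(0, 1]`, so every positive root of `P₇` exceeds `1`; `Q₇` has a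
positive root smaller than `0.76`; consequently the smallest positive root of `Q₇`
is strictly smaller than every positive real root of `P₇`. -/
theorem Q7_smallest_root_lt_P7_roots :
    (∀ X ∈ Set.Ioc (0 : ℝ) 1, 0 < P7 X) ∧
    (∀ X : ℝ, 0 < X → P7 X = 0 → 1 < X) ∧
    (∃ X : ℝ, 0 < X ∧ X < 0.76 ∧ Q7 X = 0) ∧
    (∃ m : ℝ, IsLeast {X : ℝ | 0 < X ∧ Q7 X = 0} m ∧
      ∀ Y : ℝ, 0 < Y → P7 Y = 0 → m < Y) := by
  have hP : ∀ X ∈ Set.Ioc (0 : ℝ) 1, 0 < P7 X := by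
    rintro X ⟨h0, h1⟩
    have h8 : 0 < X ^ 8 := by positivity
    have h9 : X ^ 9 ≤ X ^ 8 := pow_le_pow_of_le_one h0.le h1 (by norm_num)
    have h10 : X ^ 10 ≤ X ^ 8 := pow_le_pow_of_le_one h0.le h1 (by norm_num)
    have h11 : X ^ 11 ≤ X ^ 8 := pow_le_pow_of_le_one h0.le h1 (by norm_num)
    unfold P7
    norm_num
    linarith
  have hP1 : ∀ X : ℝ, 0 < X → P7 X = 0 → 1 < X := by
    intro X h0 hX
    by_contra h
    exact (hP X ⟨h0, not_lt.mp h⟩).ne' hX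
  have hc : Continuous Q7 := by
    unfold Q7
    fun_prop
  have hQ0 : Q7 0 < 0 := by norm_num [Q7]
  have hQ1 : 0 < Q7 0.76 := by norm_num [Q7]
  have hQ : ∃ X : ℝ, 0 < X ∧ X < 0.76 ∧ Q7 X = 0 := by
    obtain ⟨x, hx, hx0⟩ := intermediate_value_Ioo (by norm_num : (0 : ℝ) ≤ 0.76)
      hc.continuousOn ⟨hQ0, hQ1⟩
    exact ⟨x, hx.1, hx.2, hx0⟩
  refine ⟨hP, hP1, hQ, ?_⟩
  obtain ⟨x, hx0, hx1, hx⟩ := hQ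
  have hK : IsCompact (Set.Icc (0 : ℝ) 0.76 ∩ Q7 ⁻¹' {0}) :=
    isCompact_Icc.inter_right (isClosed_singleton.preimage hc)
  obtain ⟨m, ⟨⟨hm0, hm1⟩, hm⟩, hl⟩ := hK.exists_isLeast ⟨x, ⟨hx0.le, hx1.le⟩, hx⟩
  have hm' : Q7 m = 0 := hm
  refine ⟨m, ⟨⟨lt_of_le_of_ne hm0 ?_, hm'⟩, ?_⟩, ?_⟩
  · rintro rfl
    exact hQ0.ne hm'
  · rintro y ⟨hy0, hy⟩
    by_cases h : y ≤ 0.76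
    · exact hl ⟨⟨hy0.le, h⟩, hy⟩
    · exact hm1.trans (not_le.mp h).le
  · intro Y hY hY0
    have := hP1 Y hY hY0
    norm_num at hm1
    linarith
end

section
/- For every integer N ≥ 4, the polynomial P_N(X) = 5(2N−7)X^{2N−6} − (N−3)(0.01·X^{2N−5} + 2.3·X^{2N−4} + 0.05·X^{2N−3}) − (N−3)X + 2(N−3) satisfies P_N(X) > 0 for all X ∈ (0, 1]; in particular, every positive real root of P_N is strictly greater than 1. -/
/-- For every dimension `N ≥ 4`, the polynomial
`P_N(X) = 5(2N−7)X^(2N−6) − (N−3)(0.01 X^(2N−5) + 2.3 X^(2N−4) + 0.05 X^(2N−3)) − (N−3)X + 2(N−3)`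
is strictly positive on `(0, 1]`; in particular every positive real root of `P_N`
is strictly greater than `1`. -/
theorem PN_pos_on_Ioc_zero_one (N : ℕ) (hN : 4 ≤ N) :
    (∀ X : ℝ, 0 < X → X ≤ 1 →
      0 < 5 * (2 * (N : ℝ) - 7) * X ^ (2 * N - 6) -
        ((N : ℝ) - 3) * (0.01 * X ^ (2 * N - 5) + 2.3 * X ^ (2 * N - 4) +
          0.05 * X ^ (2 * N - 3)) - ((N : ℝ) - 3) * X + 2 * ((N : ℝ) - 3)) ∧
    (∀ X : ℝ, 0 < X →
      5 * (2 * (N : ℝ) - 7) * X ^ (2 * N - 6) -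
        ((N : ℝ) - 3) * (0.01 * X ^ (2 * N - 5) + 2.3 * X ^ (2 * N - 4) +
          0.05 * X ^ (2 * N - 3)) - ((N : ℝ) - 3) * X + 2 * ((N : ℝ) - 3) = 0 →
      1 < X) := by
  have key : ∀ X : ℝ, 0 < X → X ≤ 1 →
      0 < 5 * (2 * (N : ℝ) - 7) * X ^ (2 * N - 6) -
        ((N : ℝ) - 3) * (0.01 * X ^ (2 * N - 5) + 2.3 * X ^ (2 * N - 4) +
          0.05 * X ^ (2 * N - 3)) - ((N : ℝ) - 3) * X + 2 * ((N : ℝ) - 3) := by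
    intro X h0 h1
    obtain ⟨k, rfl⟩ := Nat.exists_eq_add_of_le hN
    have e1 : 2 * (4 + k) - 6 = 2 * k + 2 := by omega
    have e2 : 2 * (4 + k) - 5 = (2 * k + 2) + 1 := by omega
    have e3 : 2 * (4 + k) - 4 = (2 * k + 2) + 2 := by omega
    have e4 : 2 * (4 + k) - 3 = (2 * k + 2) + 3 := by omega
    rw [e1, e2, e3, e4, pow_add X (2 * k + 2) 1, pow_add X (2 * k + 2) 2,
      pow_add X (2 * k + 2) 3]
    have hY : 0 < X ^ (2 * k + 2) := pow_pos h0 _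
    generalize X ^ (2 * k + 2) = Y at hY
    have hk : (0 : ℝ) ≤ k := Nat.cast_nonneg k
    have h2 : X ^ 2 ≤ 1 := pow_le_one₀ h0.le h1
    have h3 : X ^ 3 ≤ 1 := pow_le_one₀ h0.le h1
    have hq : 0 < 5 - (0.01 * X + 2.3 * X ^ 2 + 0.05 * X ^ 3) := by
      norm_num
      linarith
    have a1 : 0 < ((k : ℝ) + 1) * Y * (5 - (0.01 * X + 2.3 * X ^ 2 + 0.05 * X ^ 3)) := by
      positivity
    have a2 : 0 < ((k : ℝ) + 1) * (2 - X) := mul_pos (by linarith) (by linarith)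
    have a3 : 0 ≤ 5 * (k : ℝ) * Y := by positivity
    push_cast
    linarith
  refine ⟨key, fun X h0 h => ?_⟩
  by_contra hX
  exact (key X h0 (not_lt.mp hX)).ne' h
end

section
/- There exist real numbers λ1, λ2, λ3, λ4 > 0 such that for every N ∈ {5, 6, 7} the polynomial Q_N(X) = (2N−7)λ1 X^{2N−7} − (N−3)λ2 X^{2N−6} − (N−3)λ3 X^{2N−5} − (N−3)λ4 X^{2N−4} − (N−3) has a positive real root, and the smallest positive root of Q_N is strictly smaller than every positive real root of the polynomial P_N(X) = (2N−7)λ1 X^{2N−6} − (N−3)λ2 X^{2N−5} − (N−3)λ3 X^{2N−4} − (N−3)λ4 X^{2N−3} − (N−3)X + 2(N−3). -/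
/-- `Q_N` for parameters `λ₁, λ₂, λ₃, λ₄`:
`Q_N(X) = (2N−7)λ₁X^(2N−7) − (N−3)λ₂X^(2N−6) − (N−3)λ₃X^(2N−5) − (N−3)λ₄X^(2N−4) − (N−3)`. -/
noncomputable def QN (N : ℕ) (l1 l2 l3 l4 : ℝ) : ℝ → ℝ :=
  fun X => (2 * (N : ℝ) - 7) * l1 * X ^ (2 * N - 7) - ((N : ℝ) - 3) * l2 * X ^ (2 * N - 6) -
    ((N : ℝ) - 3) * l3 * X ^ (2 * N - 5) - ((N : ℝ) - 3) * l4 * X ^ (2 * N - 4) - ((N : ℝ) - 3)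

/-- `P_N` for parameters `λ₁, λ₂, λ₃, λ₄`:
`P_N(X) = (2N−7)λ₁X^(2N−6) − (N−3)λ₂X^(2N−5) − (N−3)λ₃X^(2N−4) − (N−3)λ₄X^(2N−3) − (N−3)X + 2(N−3)`. -/
noncomputable def PN (N : ℕ) (l1 l2 l3 l4 : ℝ) : ℝ → ℝ :=
  fun X => (2 * (N : ℝ) - 7) * l1 * X ^ (2 * N - 6) - ((N : ℝ) - 3) * l2 * X ^ (2 * N - 5) -
    ((N : ℝ) - 3) * l3 * X ^ (2 * N - 4) - ((N : ℝ) - 3) * l4 * X ^ (2 * N - 3) -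
    ((N : ℝ) - 3) * X + 2 * ((N : ℝ) - 3)

/-- A continuous function negative at `0` and positive at `1` has a least positive root, `≤ 1`. -/
lemma exists_least_pos_root (f : ℝ → ℝ) (hf : Continuous f) (h0 : f 0 < 0) (h1 : 0 < f 1) :
    ∃ m : ℝ, IsLeast {X : ℝ | 0 < X ∧ f X = 0} m ∧ m ≤ 1 := by
  have hc : IsCompact (Set.Icc (0 : ℝ) 1 ∩ f ⁻¹' {0}) :=
    isCompact_Icc.inter_right (isClosed_singleton.preimage hf)
  have hne : (Set.Icc (0 : ℝ) 1 ∩ f ⁻¹' {0}).Nonempty := by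
    obtain ⟨x, hx, hfx⟩ := intermediate_value_Icc (zero_le_one' ℝ) hf.continuousOn
      (show (0 : ℝ) ∈ Set.Icc (f 0) (f 1) from ⟨h0.le, h1.le⟩)
    exact ⟨x, hx, hfx⟩
  obtain ⟨m, ⟨⟨hm0, hm1⟩, hfm⟩, hm⟩ := hc.exists_isLeast hne
  have hfm' : f m = 0 := hfm
  refine ⟨m, ⟨⟨lt_of_le_of_ne hm0 ?_, hfm'⟩, ?_⟩, hm1⟩
  · rintro rfl
    exact h0.ne hfm'
  · rintro x ⟨hx0, hx⟩
    rcases le_total x 1 with h | h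
    · exact hm ⟨⟨hx0.le, h⟩, hx⟩
    · exact hm1.trans h

/-- There exist positive parameters `λ₁, λ₂, λ₃, λ₄` such that for each `N ∈ {5, 6, 7}`,
`Q_N` has a positive real root and its smallest positive root is strictly smaller than
every positive real root of `P_N` (black hole end state in higher dimensions). -/
theorem exists_params_black_hole_in_higher_dims :
    ∃ l1 l2 l3 l4 : ℝ, 0 < l1 ∧ 0 < l2 ∧ 0 < l3 ∧ 0 < l4 ∧
      ∀ N : ℕ, N = 5 ∨ N = 6 ∨ N = 7 →
        (∃ X : ℝ, 0 < X ∧ QN N l1 l2 l3 l4 X = 0) ∧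
        (∃ m : ℝ, IsLeast {X : ℝ | 0 < X ∧ QN N l1 l2 l3 l4 X = 0} m ∧
          ∀ Y : ℝ, 0 < Y → PN N l1 l2 l3 l4 Y = 0 → m < Y) := by
  refine ⟨5, 1, 1, 1, by norm_num, by norm_num, by norm_num, by norm_num, ?_⟩
  intro N hN
  have hcont : Continuous (QN N 5 1 1 1) := by
    unfold QN
    fun_prop
  have h0 : QN N 5 1 1 1 0 < 0 := by
    rcases hN with rfl | rfl | rfl <;> norm_num [QN]
  have h1 : 0 < QN N 5 1 1 1 1 := by
    rcases hN with rfl | rfl | rfl <;> norm_num [QN]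
  obtain ⟨m, hm, hm1⟩ := exists_least_pos_root _ hcont h0 h1
  refine ⟨⟨m, hm.1⟩, m, hm, ?_⟩
  intro Y hY hP
  refine lt_of_le_of_lt hm1 ?_
  by_contra! hY1
  have h2 : Y ^ 2 ≤ 1 := pow_le_one₀ hY.le hY1
  have h3 : Y ^ 3 ≤ 1 := pow_le_one₀ hY.le hY1
  rcases hN with rfl | rfl | rfl
  · have := mul_pos (pow_pos hY 4) (show 0 < 15 - 2 * Y - 2 * Y ^ 2 - 2 * Y ^ 3 by linarith)
    norm_num [PN] at hP
    nlinarith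
  · have := mul_pos (pow_pos hY 6) (show 0 < 25 - 3 * Y - 3 * Y ^ 2 - 3 * Y ^ 3 by linarith)
    norm_num [PN] at hP
    nlinarith
  · have := mul_pos (pow_pos hY 8) (show 0 < 35 - 4 * Y - 4 * Y ^ 2 - 4 * Y ^ 3 by linarith)
    norm_num [PN] at hP
    nlinarith
end
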